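/- arXiv:1806.06971 — 2 statements merged into one kernel-verified Lean document; each statement's English description precedes it below -/
import Mathlib

section
/- For every k-subspace U ⊆ V, the endomorphism p_U := t⁻¹π_{U*} + π_U of V[t,t⁻¹] belongs to PPU(b)⁻, and its kernel on V⊕ is Ω(p_U) = {tv + V[t⁻¹] : v ∈ U*}, the image in V⊕ of tU*. -/
open Finsupp

variable (k : Type*) [Field k] (V : Type*) [AddCommGroup V] [Module k V]

/-- Multiplication by `t^n` on `V[t,t⁻¹] := ℤ →₀ V` (writing `v = ∑ᵢ tⁱ vᵢ` as the
finitely supported function `i ↦ vᵢ`). -/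
noncomputable def shift (n : ℤ) : (ℤ →₀ V) ≃ₗ[k] (ℤ →₀ V) :=
  Finsupp.domLCongr (Equiv.addRight n)

/-- The coefficient of `tⁿ` of `b̃(v,w) = ∑ₙ tⁿ (∑ᵢ b(v_{i-n}, w_i))`. -/
noncomputable def Btilde (b : LinearMap.BilinForm k V) (n : ℤ) (v w : ℤ →₀ V) : k :=
  w.sum fun i wi => b (v (i - n)) wi

/-- `φ` is a paraunitary transformation: an invertible `k[t,t⁻¹]`-linear
(i.e. `k`-linear and commuting with multiplication by `t`) endomorphism of
`V[t,t⁻¹]` preserving `b̃`. -/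
def IsPU (b : LinearMap.BilinForm k V) (φ : (ℤ →₀ V) ≃ₗ[k] (ℤ →₀ V)) : Prop :=
  (∀ v, φ (shift k V 1 v) = shift k V 1 (φ v)) ∧
  ∀ (n : ℤ) (v w : ℤ →₀ V), Btilde k V b n (φ v) (φ w) = Btilde k V b n v w

/-- The specialization `t = 1` of a `k[t,t⁻¹]`-linear endomorphism `f = ∑ᵢ tⁱ fᵢ`
of `V[t,t⁻¹]`, i.e. the endomorphism `ε₁(f) = ∑ᵢ fᵢ` of `V`. -/
noncomputable def eps (f : (ℤ →₀ V) →ₗ[k] (ℤ →₀ V)) : V →ₗ[k] V :=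
  (Finsupp.lsum k fun _ : ℤ => (LinearMap.id : V →ₗ[k] V)) ∘ₗ f ∘ₗ Finsupp.lsingle 0

/-- `φ` is pure paraunitary: paraunitary and specializing to the identity at `t = 1`. -/
def IsPPU (b : LinearMap.BilinForm k V) (φ : (ℤ →₀ V) ≃ₗ[k] (ℤ →₀ V)) : Prop :=
  IsPU k V b φ ∧ eps k V (φ : (ℤ →₀ V) →ₗ[k] (ℤ →₀ V)) = LinearMap.id

/-- `φ ∈ PPU(b)⁻`: pure paraunitary and all Laurent coefficients `φᵢ` for `i > 0` vanish. -/
def PPUneg (b : LinearMap.BilinForm k V) (φ : (ℤ →₀ V) ≃ₗ[k] (ℤ →₀ V)) : Prop :=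
  IsPPU k V b φ ∧ ∀ (x : V) (i : ℤ), 0 < i → φ (Finsupp.single 0 x) i = 0

/-- `V[t⁻¹] ⊆ V[t,t⁻¹]`: the elements with `vᵢ = 0` for `i > 0`. -/
def Vneg : Submodule k (ℤ →₀ V) where
  carrier := {v | ∀ i : ℤ, 0 < i → v i = 0}
  add_mem' := by
    intro a c ha hc i hi
    simp only [Set.mem_setOf_eq] at *
    simp [Finsupp.add_apply, ha i hi, hc i hi]
  zero_mem' := by intro i _; rfl
  smul_mem' := by
    intro c x hx i hi
    simp only [Set.mem_setOf_eq] at *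
    simp [Finsupp.smul_apply, hx i hi]

/-- The orthogonal complement `U* = {v ∈ V | b(u,v) = 0 for all u ∈ U}`. -/
def orthoC (b : LinearMap.BilinForm k V) (U : Submodule k V) : Submodule k V where
  carrier := {v | ∀ u ∈ U, b u v = 0}
  add_mem' := by
    intro a c ha hc u hu
    simp only [Set.mem_setOf_eq] at *
    rw [map_add, ha u hu, hc u hu, add_zero]
  zero_mem' := by intro u _; simp
  smul_mem' := by
    intro c x hx u hu
    simp only [Set.mem_setOf_eq] at *
    rw [map_smul, hx u hu, smul_zero]

/-- The endomorphism `p_U = t⁻¹ π_{U*} + π_U` of `V[t,t⁻¹]`, where `π` is the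
projection of `V` onto `U` along `U*` (so that `π_{U*} = 1 - π`). -/
noncomputable def pULin (π : V →ₗ[k] V) : (ℤ →₀ V) →ₗ[k] (ℤ →₀ V) :=
  (shift k V (-1)).toLinearMap ∘ₗ Finsupp.mapRange.linearMap (LinearMap.id - π) +
    Finsupp.mapRange.linearMap π

theorem shift_app (n : ℤ) (v : ℤ →₀ V) (i : ℤ) : shift k V n v i = v (i - n) := by
  simp [shift, Finsupp.domLCongr_apply, Finsupp.domCongr_apply,
    Finsupp.equivMapDomain_apply, sub_eq_add_neg]

theorem pULin_app (π : V →ₗ[k] V) (v : ℤ →₀ V) (i : ℤ) :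
    pULin k V π v i = (v (i + 1) - π (v (i + 1))) + π (v i) := by
  simp [pULin, shift_app]

/-- The inverse of `p_U`. -/
noncomputable def qULin (π : V →ₗ[k] V) : (ℤ →₀ V) →ₗ[k] (ℤ →₀ V) :=
  (shift k V 1).toLinearMap ∘ₗ Finsupp.mapRange.linearMap (LinearMap.id - π) +
    Finsupp.mapRange.linearMap π

theorem qULin_app (π : V →ₗ[k] V) (v : ℤ →₀ V) (i : ℤ) :
    qULin k V π v i = (v (i - 1) - π (v (i - 1))) + π (v i) := by
  simp [qULin, shift_app]

theorem Btilde_finsum (b : LinearMap.BilinForm k V) (n : ℤ) (v w : ℤ →₀ V) :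
    Btilde k V b n v w = ∑ᶠ i : ℤ, b (v (i - n)) (w i) := by
  rw [Btilde, Finsupp.sum, finsum_eq_sum_of_support_subset]
  intro i hi
  simp only [Function.mem_support, Finset.mem_coe, Finsupp.mem_support_iff] at *
  intro h
  simp [h] at hi

theorem fin_supp (b : LinearMap.BilinForm k V) (f g : V →ₗ[k] V) (n : ℤ) (v w : ℤ →₀ V) :
    (Function.support fun i : ℤ => b (f (v (i - n))) (g (w i))).Finite := by
  refine w.support.finite_toSet.subset ?_
  intro i hi
  simp only [Function.mem_support, Finset.mem_coe, Finsupp.mem_support_iff] at *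
  intro h
  simp [h] at hi

/-- For every subspace `U ⊆ V`, with `π` the projection onto `U`
along `U*`, the map `p_U = t⁻¹π_{U*} + π_U` is (invertible and) in `PPU(b)⁻`, and its
kernel on `V⊕` is the image of `tU*`, i.e. the preimage in `V[t,t⁻¹]` of its kernel on
`V⊕` equals `tU* + V[t⁻¹]`. -/
theorem stmt11 [FiniteDimensional k V] (b : LinearMap.BilinForm k V)
    (hsymm : ∀ v w : V, b v w = b w v)
    (haniso : ∀ v : V, b v v = 0 → v = 0)
    (U : Submodule k V) (π : V →ₗ[k] V)
    (hπ : ∀ v : V, π v ∈ U ∧ v - π v ∈ orthoC k V b U) :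
    ∃ p : (ℤ →₀ V) ≃ₗ[k] (ℤ →₀ V),
      (p : (ℤ →₀ V) →ₗ[k] (ℤ →₀ V)) = pULin k V π ∧
      PPUneg k V b p ∧
      ∀ v : ℤ →₀ V, (pULin k V π v ∈ Vneg k V ↔
        v ∈ Submodule.map (Finsupp.lsingle (1 : ℤ) : V →ₗ[k] (ℤ →₀ V)) (orthoC k V b U) ⊔
              Vneg k V) := by
  have hdisj : ∀ x : V, x ∈ U → x ∈ orthoC k V b U → x = 0 := fun x hx hx' => haniso x (hx' x hx)
  have hU : ∀ x ∈ U, π x = x := by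
    intro x hx
    have := hdisj (x - π x) (U.sub_mem hx (hπ x).1) (hπ x).2
    exact (sub_eq_zero.mp this).symm
  have hO : ∀ x ∈ orthoC k V b U, π x = 0 := by
    intro x hx
    refine hdisj _ (hπ x).1 ?_
    have := (orthoC k V b U).sub_mem hx (hπ x).2
    simpa using this
  have hid : ∀ x, π (π x) = π x := fun x => hU _ (hπ x).1
  have h1 : ∀ x y, b (π x) (y - π y) = 0 := fun x y => (hπ y).2 _ (hπ x).1
  have h2 : ∀ x y, b (x - π x) (π y) = 0 := fun x y => by rw [hsymm]; exact h1 y x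
  let p : (ℤ →₀ V) ≃ₗ[k] (ℤ →₀ V) := LinearEquiv.ofLinearMap (pULin k V π) (qULin k V π)
    (by
      refine LinearMap.ext fun v => Finsupp.ext fun i => ?_
      simp [pULin_app, qULin_app, hid])
    (by
      refine LinearMap.ext fun v => Finsupp.ext fun i => ?_
      simp [pULin_app, qULin_app, hid])
  have hp : ∀ v i, p v i = (v (i + 1) - π (v (i + 1))) + π (v i) := fun v i => pULin_app k V π v i
  refine ⟨p, rfl, ⟨⟨⟨?_, ?_⟩, ?_⟩, ?_⟩, ?_⟩
  · intro v
    ext i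
    simp only [hp, shift_app]
    rw [show i + 1 - 1 = i - 1 + 1 by ring]
  · intro n v w
    rw [Btilde_finsum, Btilde_finsum]
    set ρ : V →ₗ[k] V := LinearMap.id - π with hρ
    have e1 : ∀ i : ℤ, b (p v (i - n)) (p w i) =
        b (ρ (v ((i + 1) - n))) (ρ (w (i + 1))) + b (π (v (i - n))) (π (w i)) := by
      intro i
      rw [hp, hp, show i - n + 1 = i + 1 - n by ring]
      simp only [map_add, LinearMap.add_apply, h1, h2, hρ, LinearMap.sub_apply, LinearMap.id_apply]
      simp only [add_zero, zero_add]
    have e2 : ∀ i : ℤ, b (v (i - n)) (w i) =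
        b (ρ (v (i - n))) (ρ (w i)) + b (π (v (i - n))) (π (w i)) := by
      intro i
      have a1 : v (i - n) = ρ (v (i - n)) + π (v (i - n)) := by simp [hρ]
      have a2 : w i = ρ (w i) + π (w i) := by simp [hρ]
      conv_lhs => rw [a1, a2]
      simp only [map_add, LinearMap.add_apply, h1, h2, hρ, LinearMap.sub_apply, LinearMap.id_apply]
      simp only [add_zero, zero_add]
    have s1 := fin_supp k V b ρ ρ n v w
    have s2 := fin_supp k V b π π n v w
    have s3 : (Function.support fun i : ℤ =>
        b (ρ (v ((i + 1) - n))) (ρ (w (i + 1)))).Finite :=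
      s1.preimage (f := fun i : ℤ => i + 1) (add_left_injective (1 : ℤ)).injOn
    rw [finsum_congr e1, finsum_congr e2, finsum_add_distrib s3 s2, finsum_add_distrib s1 s2]
    congr 1
    exact finsum_comp_equiv (Equiv.addRight (1 : ℤ))
      (f := fun i : ℤ => b (ρ (v (i - n))) (ρ (w i)))
  · refine LinearMap.ext fun x => ?_
    have : p (Finsupp.single 0 x) = Finsupp.single (-1) (x - π x) + Finsupp.single 0 (π x) := by
      ext i
      rw [hp]
      simp only [Finsupp.add_apply, Finsupp.single_apply]
      rcases eq_or_ne i 0 with rfl | h0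
      · simp
      · rcases eq_or_ne i (-1) with rfl | h1
        · simp
        · rw [if_neg (by omega), if_neg (by omega), if_neg (by omega), if_neg (by omega)]
          simp
    change (Finsupp.lsum k fun _ : ℤ => (LinearMap.id : V →ₗ[k] V)) (p (Finsupp.single 0 x)) = x
    rw [this, map_add, Finsupp.lsum_single, Finsupp.lsum_single]
    simp
  · intro x i hi
    rw [hp, Finsupp.single_eq_of_ne (by omega), Finsupp.single_eq_of_ne (by omega)]
    simp
  · intro v
    constructor
    · intro h
      have h' : ∀ i : ℤ, 0 < i → v (i + 1) - π (v (i + 1)) + π (v i) = 0 := fun i hi => by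
        rw [← pULin_app]; exact h i hi
      have hb : ∀ i : ℤ, 0 < i → π (v i) = 0 := fun i hi => by
        have := congrArg π (h' i hi)
        simpa [hid] using this
      have hc : ∀ i : ℤ, 1 < i → v i = 0 := fun i hi => by
        have := h' (i - 1) (by omega)
        rw [hb (i - 1) (by omega), sub_add_cancel, hb i (by omega)] at this
        simpa using this
      refine Submodule.mem_sup.2 ⟨Finsupp.single 1 (v 1), ⟨v 1, ?_, rfl⟩,
        v - Finsupp.single 1 (v 1), ?_, by simp⟩
      · have := (hπ (v 1)).2
        rw [hb 1 one_pos, sub_zero] at this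
        exact this
      · intro i hi
        rcases eq_or_ne i 1 with rfl | h1
        · simp
        · rw [Finsupp.sub_apply, hc i (by omega), Finsupp.single_eq_of_ne (by omega), sub_zero]
    · intro h
      obtain ⟨_, ⟨u, hu, rfl⟩, w, hw, rfl⟩ := Submodule.mem_sup.1 h
      have hw' : ∀ i : ℤ, 0 < i → w i = 0 := hw
      intro i hi
      rw [pULin_app]
      simp only [Finsupp.add_apply, Finsupp.lsingle_apply]
      rw [hw' i hi, hw' (i + 1) (by omega), Finsupp.single_eq_of_ne (a := 1) (a' := i + 1) (by omega)]
      rcases eq_or_ne i 1 with rfl | h1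
      · simp [hO u hu]
      · rw [Finsupp.single_eq_of_ne (by omega)]
        simp
end

section
/- The map U ↦ p_U is an isomorphism of lattices from the lattice X(b) of all k-subspaces of V (ordered by inclusion) onto the interval [t⁻¹·id, id] in PPU(b) with the right-invariant order whose negative cone is PPU(b)⁻. In particular, the interval [t⁻¹·id, id] consists exactly of the elements p_U for U a k-subspace of V. -/
open Finsupp

variable (k : Type*) [Field k] (V : Type*) [AddCommGroup V] [Module k V]

section helpers
variable {k V}

lemma shift_single (n i : ℤ) (x : V) :
    shift k V n (single i x) = single (i + n) x := by
  simp [shift]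

lemma shift_apply' (n i : ℤ) (v : ℤ →₀ V) : shift k V n v i = v (i - n) := by
  simp [shift, Finsupp.domLCongr, sub_eq_add_neg]

lemma Btilde_add_left (b : LinearMap.BilinForm k V) (n : ℤ) (v v' w : ℤ →₀ V) :
    Btilde k V b n (v + v') w = Btilde k V b n v w + Btilde k V b n v' w := by
  simp [Btilde, Finsupp.sum, Finset.sum_add_distrib]

lemma Btilde_add_right (b : LinearMap.BilinForm k V) (n : ℤ) (v w w' : ℤ →₀ V) :
    Btilde k V b n v (w + w') = Btilde k V b n v w + Btilde k V b n v w' := by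
  unfold Btilde
  rw [Finsupp.sum_add_index'] <;> simp

lemma Btilde_single_right (b : LinearMap.BilinForm k V) (n j : ℤ) (v : ℤ →₀ V) (y : V) :
    Btilde k V b n v (single j y) = b (v (j - n)) y := by
  simp [Btilde]

lemma Btilde_single_left (b : LinearMap.BilinForm k V) (n i : ℤ) (x : V) (w : ℤ →₀ V) :
    Btilde k V b n (single i x) w = b x (w (i + n)) := by
  induction w using Finsupp.induction_linear with
  | zero => simp [Btilde]
  | add f g hf hg => simp [Btilde_add_right, hf, hg]
  | single j y =>
    rw [Btilde_single_right]
    by_cases h : i = j - n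
    · subst h; simp
    · have h' : ¬ j = i + n := by omega
      rw [Finsupp.single_eq_of_ne (by omega), Finsupp.single_eq_of_ne (by omega)]
      simp

lemma IsPU.mul {b : LinearMap.BilinForm k V} {f g : (ℤ →₀ V) ≃ₗ[k] (ℤ →₀ V)}
    (hf : IsPU k V b f) (hg : IsPU k V b g) : IsPU k V b (f * g) := by
  refine ⟨fun v => ?_, fun n v w => ?_⟩
  · simp only [LinearEquiv.mul_apply, hg.1, hf.1]
  · simp only [LinearEquiv.mul_apply, hg.2, hf.2]

lemma equiv_apply_inv (f : (ℤ →₀ V) ≃ₗ[k] (ℤ →₀ V)) (v : ℤ →₀ V) : f (f⁻¹ v) = v :=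
  f.apply_symm_apply v

lemma IsPU.inv {b : LinearMap.BilinForm k V} {f : (ℤ →₀ V) ≃ₗ[k] (ℤ →₀ V)}
    (hf : IsPU k V b f) : IsPU k V b f⁻¹ := by
  refine ⟨fun v => ?_, fun n v w => ?_⟩
  · apply f.injective
    rw [hf.1, equiv_apply_inv, equiv_apply_inv]
  · rw [← hf.2, equiv_apply_inv, equiv_apply_inv]

/-- Sum of coefficients. -/
noncomputable def sumC : (ℤ →₀ V) →ₗ[k] V :=
  Finsupp.lsum k fun _ : ℤ => (LinearMap.id : V →ₗ[k] V)

lemma sumC_single (i : ℤ) (x : V) : sumC (k := k) (single i x) = x := by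
  simp [sumC]

lemma sumC_shift (n : ℤ) (v : ℤ →₀ V) : sumC (k := k) (shift k V n v) = sumC (k := k) v := by
  induction v using Finsupp.induction_linear with
  | zero => simp
  | add f g hf hg => simp only [map_add, hf, hg]
  | single j y => rw [shift_single, sumC_single, sumC_single]

lemma sumC_apply {f : (ℤ →₀ V) ≃ₗ[k] (ℤ →₀ V)}
    (hf : ∀ v, f (shift k V 1 v) = shift k V 1 (f v))
    (he : eps k V (f : (ℤ →₀ V) →ₗ[k] (ℤ →₀ V)) = LinearMap.id) (v : ℤ →₀ V) :
    sumC (k := k) (f v) = sumC (k := k) v := by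
  have step : ∀ (i : ℤ) (x : V),
      sumC (k := k) (f (single (i + 1) x)) = sumC (k := k) (f (single i x)) := by
    intro i x
    rw [← shift_single (k := k), hf, sumC_shift]
  induction v using Finsupp.induction_linear with
  | zero => simp
  | add f g hf hg => simp only [map_add, hf, hg]
  | single j y =>
    rw [sumC_single]
    induction j using Int.induction_on with
    | zero => exact LinearMap.congr_fun he y
    | succ i ih => rw [step, ih]
    | pred i ih =>
      rw [← step, sub_add_cancel, ih]

lemma IsPPU.of_sumC {b : LinearMap.BilinForm k V} {f : (ℤ →₀ V) ≃ₗ[k] (ℤ →₀ V)}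
    (h : IsPU k V b f) (hs : ∀ v, sumC (k := k) (f v) = sumC (k := k) v) : IsPPU k V b f := by
  refine ⟨h, ?_⟩
  ext x
  change sumC (k := k) (f (single 0 x)) = x
  rw [hs, sumC_single]

lemma IsPPU.mul {b : LinearMap.BilinForm k V} {f g : (ℤ →₀ V) ≃ₗ[k] (ℤ →₀ V)}
    (hf : IsPPU k V b f) (hg : IsPPU k V b g) : IsPPU k V b (f * g) := by
  refine IsPPU.of_sumC (hf.1.mul hg.1) fun v => ?_
  rw [LinearEquiv.mul_apply, sumC_apply hf.1.1 hf.2, sumC_apply hg.1.1 hg.2]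

lemma IsPPU.inv {b : LinearMap.BilinForm k V} {f : (ℤ →₀ V) ≃ₗ[k] (ℤ →₀ V)}
    (hf : IsPPU k V b f) : IsPPU k V b f⁻¹ := by
  refine IsPPU.of_sumC hf.1.inv fun v => ?_
  rw [← sumC_apply hf.1.1 hf.2, equiv_apply_inv]

lemma isPPU_shift (b : LinearMap.BilinForm k V) (m : ℤ) : IsPPU k V b (shift k V m) := by
  refine IsPPU.of_sumC ⟨fun v => ?_, fun n v w => ?_⟩ (sumC_shift m)
  · ext i
    simp only [shift_apply']
    congr 1; ring
  · induction w using Finsupp.induction_linear with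
    | zero => simp [Btilde]
    | add f g hf hg => simp only [map_add, Btilde_add_right, hf, hg]
    | single j y =>
      rw [shift_single, Btilde_single_right, Btilde_single_right, shift_apply']
      congr 3; ring

lemma pULin_single (π : V →ₗ[k] V) (i : ℤ) (x : V) :
    pULin k V π (single i x) = single i (π x) + single (i - 1) (x - π x) := by
  simp only [pULin, LinearMap.add_apply, LinearMap.comp_apply, LinearEquiv.coe_coe,
    Finsupp.mapRange.linearMap_apply, Finsupp.mapRange_single, shift_single]
  rw [add_comm]; rfl

end helpers

/-- `U ↦ p_U` is an isomorphism of lattices from `X(b)` (the lattice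
of `k`-subspaces of `V`, ordered by inclusion) onto the interval `[t⁻¹·id, id]` of
`PPU(b)` (ordered by `φ ≤ ψ :⟺ φψ⁻¹ ∈ PPU(b)⁻`); in particular that interval
consists exactly of the elements `p_U`. -/
theorem stmt18 [FiniteDimensional k V] (b : LinearMap.BilinForm k V)
    (hsymm : ∀ v w : V, b v w = b w v)
    (haniso : ∀ v : V, b v v = 0 → v = 0)
    (π : Submodule k V → (V →ₗ[k] V))
    (hπ : ∀ (U : Submodule k V) (v : V), π U v ∈ U ∧ v - π U v ∈ orthoC k V b U)
    (p : Submodule k V → ((ℤ →₀ V) ≃ₗ[k] (ℤ →₀ V)))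
    (hp : ∀ U : Submodule k V, (p U : (ℤ →₀ V) →ₗ[k] (ℤ →₀ V)) = pULin k V (π U)) :
    (∀ U : Submodule k V,
      PPUneg k V b (shift k V (-1) * (p U)⁻¹) ∧ PPUneg k V b (p U)) ∧
    (∀ U W : Submodule k V, U ≤ W ↔ PPUneg k V b (p U * (p W)⁻¹)) ∧
    (∀ φ : (ℤ →₀ V) ≃ₗ[k] (ℤ →₀ V), IsPPU k V b φ →
      PPUneg k V b (shift k V (-1) * φ⁻¹) → PPUneg k V b φ →
      ∃ U : Submodule k V, φ = p U) := by
  have hps : ∀ U i x, p U (single i x) = single i (π U x) + single (i - 1) (x - π U x) := by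
    intro U i x
    rw [← pULin_single, ← hp]; rfl
  have hort : ∀ (U : Submodule k V) (x y : V), x ∈ U → y ∈ orthoC k V b U → b x y = 0 :=
    fun U x y hx hy => hy x hx
  have huniq : ∀ (U : Submodule k V) (x u : V), u ∈ U → x - u ∈ orthoC k V b U → π U x = u := by
    intro U x u hu hx
    have h1 : π U x - u ∈ U := U.sub_mem (hπ U x).1 hu
    have h2 : π U x - u ∈ orthoC k V b U := by
      have := (orthoC k V b U).sub_mem hx (hπ U x).2
      simpa using this
    exact sub_eq_zero.1 (haniso _ (hort U _ _ h1 h2))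
  have hid : ∀ (U : Submodule k V) (u : V), u ∈ U → π U u = u := by
    intro U u hu
    refine huniq U u u hu ?_
    rw [sub_self]; exact Submodule.zero_mem _
  have hppu : ∀ U, IsPPU k V b (p U) := by
    intro U
    refine IsPPU.of_sumC ⟨fun v => ?_, fun n v w => ?_⟩ fun v => ?_
    · induction v using Finsupp.induction_linear with
      | zero => simp
      | add f g hf hg => simp only [map_add, hf, hg]
      | single j y =>
        rw [shift_single, hps, hps, map_add, shift_single, shift_single]
        congr 2; ring
    · induction v using Finsupp.induction_linear with
      | zero => simp [Btilde]
      | add f g hf hg => simp only [map_add, Btilde_add_left, hf, hg]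
      | single i x =>
        induction w using Finsupp.induction_linear with
        | zero => simp [Btilde]
        | add f g hf hg => simp only [map_add, Btilde_add_right, hf, hg]
        | single j y =>
          have e1 : b (π U x) (y - π U y) = 0 := hort U _ _ (hπ U x).1 (hπ U y).2
          have e2 : b (x - π U x) (π U y) = 0 := by
            rw [hsymm]; exact hort U _ _ (hπ U y).1 (hπ U x).2
          have e3 : b x y = b (π U x) (π U y) + b (x - π U x) (y - π U y) := by
            conv_lhs => rw [← add_sub_cancel (π U x) x, ← add_sub_cancel (π U y) y]
            simp only [map_add, LinearMap.add_apply, e1, e2]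
            ring
          simp only [hps, Btilde_add_left, Btilde_add_right, Btilde_single_left]
          have key : ∀ (a c : ℤ) (u v : V), b u (single a v c) = if a = c then b u v else 0 := by
            intro a c u v
            rw [Finsupp.single_apply]; split_ifs <;> simp
          simp only [key, e1, e2, e3, ite_self]
          by_cases h : j = i + n
          · rw [if_pos h, if_pos (by omega), if_pos h]; ring_nf
          · rw [if_neg h, if_neg (by omega), if_neg h]; ring
    · induction v using Finsupp.induction_linear with
      | zero => simp
      | add f g hf hg => simp only [map_add, hf, hg]
      | single j y =>
        rw [hps, map_add, sumC_single, sumC_single, sumC_single]; abel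
  have hinv : ∀ U x, (p U)⁻¹ (single 0 x) = single 0 (π U x) + single 1 (x - π U x) := by
    intro U x
    apply (p U).injective
    rw [equiv_apply_inv, map_add, hps, hps, map_sub, hid U _ (hπ U x).1]
    simp [← Finsupp.single_add]
  refine ⟨fun U => ⟨⟨(isPPU_shift b _).mul (hppu U).inv, fun x i hi => ?_⟩, hppu U,
    fun x i hi => ?_⟩, fun U W => ⟨fun h => ⟨(hppu U).mul (hppu W).inv, fun x i hi => ?_⟩,
      fun h => ?_⟩, fun φ hφ h1 h2 => ?_⟩
  · rw [LinearEquiv.mul_apply, hinv, map_add, shift_single, shift_single, Finsupp.add_apply,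
      Finsupp.single_eq_of_ne (by omega), Finsupp.single_eq_of_ne (by omega), add_zero]
  · rw [hps, Finsupp.add_apply,
      Finsupp.single_eq_of_ne (by omega), Finsupp.single_eq_of_ne (by omega), add_zero]
  · have h0 : π U (x - π W x) = 0 := by
      refine huniq U _ _ U.zero_mem ?_
      rw [sub_zero]
      exact fun u hu => (hπ W x).2 u (h hu)
    rw [LinearEquiv.mul_apply, hinv, map_add, hps, hps, h0]
    simp only [Finsupp.add_apply]
    rw [Finsupp.single_eq_of_ne (by omega), Finsupp.single_eq_of_ne (by omega),
      Finsupp.single_eq_of_ne (a := (1 : ℤ) - 1) (by omega)]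
    simp
  · have h0 : ∀ x, π U (x - π W x) = 0 := by
      intro x
      have := h.2 x 1 one_pos
      rw [LinearEquiv.mul_apply, hinv, map_add, hps, hps] at this
      simpa [Finsupp.single_apply] using this
    intro u hu
    have h3 : b u (u - π W u) = 0 := by
      have := (hπ U (u - π W u)).2 u hu
      rwa [h0, sub_zero] at this
    have h4 : b (π W u) (u - π W u) = 0 := (hπ W u).2 _ (hπ W u).1
    have h5 : u - π W u = 0 := by
      apply haniso
      rw [map_sub b, LinearMap.sub_apply, h3, h4, sub_zero]
    rw [sub_eq_zero.1 h5]; exact (hπ W u).1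
  · have adj : ∀ (n : ℤ) (x y : V),
        b (φ (single 0 x) (-n)) y = b x (φ⁻¹ (single 0 y) n) := by
      intro n x y
      have := hφ.1.2 n (single 0 x) (φ⁻¹ (single 0 y))
      rw [equiv_apply_inv, Btilde_single_left, Btilde_single_right] at this
      simpa using this
    have hlow : ∀ (x : V) (i : ℤ), i < -1 → φ (single 0 x) i = 0 := by
      intro x i hi
      apply haniso
      have h3 := h1.2 (φ (single 0 x) i) (-i - 1) (by omega)
      rw [LinearEquiv.mul_apply, shift_apply'] at h3
      have h4 := adj (-i) x (φ (single 0 x) i)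
      rw [neg_neg] at h4
      rw [h4]
      have : -i - 1 - -1 = -i := by ring
      rw [this] at h3
      rw [h3, map_zero]
    have hform0 : ∀ x, φ (single 0 x) =
        single 0 (φ (single 0 x) 0) + single (-1) (φ (single 0 x) (-1)) := by
      intro x
      ext i
      rw [Finsupp.add_apply]
      rcases lt_trichotomy i 0 with hi | hi | hi
      · by_cases hi' : i = -1
        · subst hi'; simp
        · rw [hlow x i (by omega), Finsupp.single_eq_of_ne (by omega),
            Finsupp.single_eq_of_ne (by omega), add_zero]
      · subst hi; simp
      · rw [h2.2 x i hi, Finsupp.single_eq_of_ne (by omega),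
            Finsupp.single_eq_of_ne (by omega), add_zero]
    have hsum : ∀ x, φ (single 0 x) (-1) = x - φ (single 0 x) 0 := by
      intro x
      have := sumC_apply hφ.1.1 hφ.2 (single 0 x)
      rw [hform0 x, map_add, sumC_single, sumC_single, sumC_single] at this
      rw [eq_sub_iff_add_eq, add_comm]; exact this
    have hform : ∀ x, φ (single 0 x) =
        single 0 (φ (single 0 x) 0) + single (-1) (x - φ (single 0 x) 0) := by
      intro x
      rw [← hsum]; exact hform0 x
    let φ0 : V →ₗ[k] V := Finsupp.lapply 0 ∘ₗ φ.toLinearMap ∘ₗ Finsupp.lsingle 0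
    have hφ0 : ∀ x, φ0 x = φ (single 0 x) 0 := fun x => rfl
    have horth : ∀ x y, b (φ0 x) (y - φ0 y) = 0 := by
      intro x y
      have := hφ.1.2 (-1) (single 0 x) (single 0 y)
      rw [hform x, hform y] at this
      simp only [Btilde_add_left, Btilde_add_right, Btilde_single_left, ← hφ0] at this
      simpa [Finsupp.single_apply] using this
    refine ⟨LinearMap.range φ0, ?_⟩
    have hπ0 : ∀ x, π (LinearMap.range φ0) x = φ0 x := by
      intro x
      refine huniq _ _ _ ⟨x, rfl⟩ ?_
      rintro _ ⟨z, rfl⟩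
      exact horth z x
    have hz : ∀ x, φ (single 0 x) = p (LinearMap.range φ0) (single 0 x) := by
      intro x
      rw [hform, hps, hπ0, hφ0]; simp
    have hcomm := (hppu (LinearMap.range φ0)).1.1
    ext1 v
    induction v using Finsupp.induction_linear with
    | zero => simp
    | add f g hf hg => simp only [map_add, hf, hg]
    | single j y =>
      induction j using Int.induction_on with
      | zero => exact hz y
      | succ i ih => rw [← shift_single (k := k), hφ.1.1, hcomm, ih]
      | pred i ih =>
        apply (shift k V 1).injective
        rw [← hφ.1.1, ← hcomm, shift_single, sub_add_cancel, ih]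
end
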